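/- Fix ρ ∈ (0,1] and λ₃ > 0, and set m = ⌈λ₃ √ρ · n^{1/(2k+2)}⌉ and L = ⌊ρ · n^{(k+2)/(k+1)}⌋. Let Ξ_m = {(L + f_l(y)) mod n : y ∈ ℤ^k, 0 ≤ y_i < m for all i} ⊆ ZMod n. For every δ₄ with 0 < δ₄ < 1 there exist α₄ > 0 and N ∈ ℕ such that for every n ≥ N, with probability at least 1 − δ₄ over the random l: for every point x ∈ ZMod n there exist x', x'' ∈ Ξ_m and integers t', t'' with 0 < t' < α₄ ρ^{−k/2} n^{(k+2)/(2k+2)} and 0 < t'' < α₄ ρ^{−k/2} n^{(k+2)/(2k+2)} such that x = x' + t' mod n and x'' = x + t'' mod n. -/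

import Mathlib

/-!
Let `S` be the set of pairs `(y, t)` with `0 ≤ yᵢ < M` and `0 ≤ t < T`, where `M` is about `m / 2`,
and let `F_l(y, t) = f_l(y) + t`. Since `f_l` is additive, if every element of `ZMod n` is a sum of
two values of `F_l` on `S`, then every element is `f_l(y) + t` with `0 ≤ yᵢ < m` and
`0 ≤ t ≤ 2T - 2`; applied to two translates of `x`, this puts endpoints on both sides of `x`.

If `w` is not a sum of two values of `F_l`, the fibre sizes `r(z)` and `r(w - z)` have disjoint
supports, so by Cauchy–Schwarz `n ∑ r² ≥ 2|S|²`, twice the least possible value. But `∑ r²` counts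
the collisions `F_l(y, t) = F_l(y', t')`, which can be averaged over `l`: the homomorphism
`l ↦ f_l(y - y')` is uniformly distributed on a subgroup, whose index `d` is at most `M` for
`y ≠ y'`, and hence hits an interval of length `T` with probability at most `(T + d) / n`. By
Markov's inequality some `w` is missed for a proportion at most `(M + n / M ^ k) / T` of the `l`, so
`T` may be taken to be `(M + n / M ^ k) / δ₄`, in which the term `n / M ^ k`, of order
`(λ₃ √ρ)⁻ᵏ n^{(k+2)/(2k+2)}`, dominates for large `n`.
-/

open scoped BigOperators

noncomputable section

attribute [local instance 10] Classical.propDecidable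

/-- Cycle distance on `ZMod n`: `min(r, n - r)` where `r` is the representative of `y - x`. -/
def cycleDist (n : ℕ) [NeZero n] (x y : ZMod n) : ℕ :=
  min (y - x).val (n - (y - x).val)

/-- `f_l(y) = Σ yᵢ lᵢ` in `ZMod n`. -/
def fl {n k : ℕ} [NeZero n] (l : Fin k → ZMod n) (y : Fin k → ℤ) : ZMod n :=
  ∑ i, (y i : ZMod n) * l i

/-- Probability of `E` when `l₁,…,l_k` are independent uniform elements of `ZMod n`,
modelled as a uniform element of the product space. -/
def lProb (n k : ℕ) [NeZero n] (E : (Fin k → ZMod n) → Prop) : ℝ :=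
  ((Finset.univ.filter E).card : ℝ) / (Fintype.card (Fin k → ZMod n) : ℝ)

/-- `b` is a sign pattern in `{-1,1}^k`. -/
def IsSign {k : ℕ} (b : Fin k → ℤ) : Prop := ∀ i, b i = 1 ∨ b i = -1

/-- Membership in `Y_m^b = {y ∈ ℤ^k : 0 ≤ bᵢ yᵢ < m}`. -/
def inYmb {k : ℕ} (b : Fin k → ℤ) (m : ℕ) (y : Fin k → ℤ) : Prop :=
  ∀ i, 0 ≤ b i * y i ∧ b i * y i < (m : ℤ)

/-- `m = m(n) = ⌈c n^{1/(2k+2)}⌉`. -/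
def mOf (k : ℕ) (c : ℝ) (n : ℕ) : ℕ := ⌈c * (n : ℝ) ^ ((1 : ℝ) / (2 * (k : ℝ) + 2))⌉₊

/-- The standard distance `s = s(n) = n / m^k`. -/
def sOf (k : ℕ) (c : ℝ) (n : ℕ) : ℝ := (n : ℝ) / (mOf k c n : ℝ) ^ k

open Finset Filter

section Collisions

variable {σ G : Type*}

/-- The values of `F` on `S` form an additive basis of order two: every element is a sum of two of
them. -/
def PairSumsCover [Add G] (S : Finset σ) (F : σ → G) : Prop :=
  ∀ w, ∃ s ∈ S, ∃ s' ∈ S, F s + F s' = w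

variable [DecidableEq G]

/-- The collisions of `F` on `S`: the ordered pairs of elements of `S`, not necessarily distinct,
with the same image. -/
def collisions (S : Finset σ) (F : σ → G) : Finset (σ × σ) :=
  {p ∈ S ×ˢ S | F p.1 = F p.2}

theorem card_collisions [Fintype G] (S : Finset σ) (F : σ → G) :
    #(collisions S F) = ∑ z, #{s ∈ S | F s = z} ^ 2 := by
  rw [card_eq_sum_card_fiberwise (f := fun p => F p.1) (t := univ) fun _ _ => mem_univ _]
  refine sum_congr rfl fun z _ => ?_
  rw [sq, ← card_product]
  congr 1
  ext p
  simp only [collisions, mem_filter, mem_product]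
  grind

theorem sum_card_collisions {Ω : Type*} [Fintype Ω] (S : Finset σ) (F : Ω → σ → G) :
    ∑ ω, #(collisions S (F ω)) = ∑ s ∈ S, ∑ s' ∈ S, #{ω | F ω s = F ω s'} := by
  simp_rw [collisions, ← sum_product', card_filter]
  exact sum_comm

theorem sq_card_le_card_mul_card_collisions [Fintype G] (S : Finset σ) (F : σ → G) :
    #S ^ 2 ≤ Fintype.card G * #(collisions S F) := by
  rw [card_collisions, card_eq_sum_card_fiberwise (f := F) (t := univ) fun _ _ => mem_univ _]
  exact sq_sum_le_card_mul_sum_sq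

theorem two_mul_sq_card_le_of_not_pairSumsCover [AddGroup G] [Fintype G] {S : Finset σ} {F : σ → G}
    (h : ¬ PairSumsCover S F) : 2 * #S ^ 2 ≤ Fintype.card G * #(collisions S F) := by
  simp only [PairSumsCover, not_forall, not_exists, not_and] at h
  obtain ⟨w, hw⟩ := h
  set r : G → ℕ := fun z => #{s ∈ S | F s = z}
  have sum_r : ∑ z, r z = #S := (card_eq_sum_card_fiberwise fun _ _ => mem_univ _).symm
  have sum_reflect (g : G → ℕ) : ∑ z, g (-z + w) = ∑ z, g z :=
    ((Equiv.neg G).trans (Equiv.addRight w)).sum_comp g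
  have disjoint_supports (z : G) : r z * r (-z + w) = 0 := by
    by_contra hz
    obtain ⟨hz₁, hz₂⟩ := mul_ne_zero_iff.1 hz
    obtain ⟨s, hs⟩ := card_ne_zero.1 hz₁
    obtain ⟨s', hs'⟩ := card_ne_zero.1 hz₂
    rw [mem_filter] at hs hs'
    exact hw s hs.1 s' hs'.1 (by rw [hs.2, hs'.2, add_neg_cancel_left])
  have sum_sq : ∑ z, (r z + r (-z + w)) ^ 2 = 2 * #(collisions S F) :=
    calc ∑ z, (r z + r (-z + w)) ^ 2 = ∑ z, (r z ^ 2 + r (-z + w) ^ 2) :=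
          sum_congr rfl fun z _ => by linear_combination 2 * disjoint_supports z
      _ = 2 * #(collisions S F) := by
          rw [sum_add_distrib, sum_reflect fun z => r z ^ 2, card_collisions, two_mul]
  have cauchy_schwarz : (2 * #S) ^ 2 ≤ Fintype.card G * (2 * #(collisions S F)) :=
    calc (2 * #S) ^ 2 = (∑ z, (r z + r (-z + w))) ^ 2 := by
          rw [sum_add_distrib, sum_reflect, sum_r, two_mul]
      _ ≤ Fintype.card G * ∑ z, (r z + r (-z + w)) ^ 2 := sq_sum_le_card_mul_sum_sq
      _ = Fintype.card G * (2 * #(collisions S F)) := by rw [sum_sq]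
  linarith

/-- Markov's inequality for the excess `|G| Q - |S|² ≥ 0`, where `Q` is the number of collisions,
with terms moved so that no subtraction occurs. -/
theorem card_not_pairSumsCover_mul_add_le [AddGroup G] [Fintype G] {Ω : Type*} [Fintype Ω]
    (S : Finset σ) (F : Ω → σ → G) :
    #{ω | ¬ PairSumsCover S (F ω)} * #S ^ 2 + Fintype.card Ω * #S ^ 2
      ≤ Fintype.card G * ∑ ω, #(collisions S (F ω)) := by
  have pointwise (ω : Ω) : (if ¬ PairSumsCover S (F ω) then #S ^ 2 else 0) + #S ^ 2
      ≤ Fintype.card G * #(collisions S (F ω)) := by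
    split_ifs with h
    · rw [zero_add]
      exact sq_card_le_card_mul_card_collisions S (F ω)
    · rw [← two_mul]
      exact two_mul_sq_card_le_of_not_pairSumsCover h
  calc #{ω | ¬ PairSumsCover S (F ω)} * #S ^ 2 + Fintype.card Ω * #S ^ 2
      = ∑ ω, ((if ¬ PairSumsCover S (F ω) then #S ^ 2 else 0) + #S ^ 2) := by
        rw [sum_add_distrib, ← sum_filter, sum_const, sum_const, smul_eq_mul, smul_eq_mul,
          card_univ]
    _ ≤ ∑ ω, Fintype.card G * #(collisions S (F ω)) := sum_le_sum fun ω _ => pointwise ω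
    _ = Fintype.card G * ∑ ω, #(collisions S (F ω)) := (mul_sum ..).symm

end Collisions

section Intervals

theorem card_mul_le_add_of_modEq {R : Finset ℕ} {d T : ℕ} (hRT : R ⊆ range T)
    (hR : ∀ t ∈ R, ∀ t' ∈ R, t ≡ t' [MOD d]) : #R * d ≤ T + d := by
  have div_lt : Set.MapsTo (· / d) (R : Set ℕ) (range (T / d + 1)) := fun t ht => by
    have := Nat.div_le_div_right (c := d) (mem_range.1 (hRT ht)).le
    simpa [Nat.lt_succ_iff] using this
  have div_injOn : Set.InjOn (· / d) (R : Set ℕ) := fun t ht t' ht' h => by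
    rw [← Nat.div_add_mod t d, ← Nat.div_add_mod t' d, hR t ht t' ht', show t / d = t' / d from h]
  calc #R * d ≤ (T / d + 1) * d := by
        gcongr
        simpa using card_le_card_of_injOn _ div_lt div_injOn
    _ ≤ T + d := by
        rw [add_mul, one_mul]
        gcongr
        exact Nat.div_mul_le_self T d

theorem index_dvd_of_intCast_mem {n : ℕ} (H : AddSubgroup (ZMod n)) {z : ℤ}
    (hz : (z : ZMod n) ∈ H) : (H.index : ℤ) ∣ z := by
  have generates (q : ZMod n ⧸ H) : q ∈ AddSubgroup.zmultiples ((1 : ZMod n) : ZMod n ⧸ H) := by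
    induction q using QuotientAddGroup.induction_on with
    | H a =>
      obtain ⟨b, rfl⟩ := ZMod.intCast_surjective a
      exact ⟨b, by simp [← QuotientAddGroup.mk_zsmul]⟩
  rw [AddSubgroup.index, ← addOrderOf_eq_card_of_forall_mem_zmultiples generates,
    addOrderOf_dvd_iff_zsmul_eq_zero, ← QuotientAddGroup.mk_zsmul, zsmul_one,
    QuotientAddGroup.eq_zero_iff]
  exact hz

theorem card_mul_card_fiber {V W : Type*} [AddGroup V] [Fintype V] [AddGroup W] [Fintype W]
    [DecidableEq W] (φ : V →+ W) {w : W} (hw : w ∈ φ.range) :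
    Fintype.card W * #{v | φ v = w} = Fintype.card V * φ.range.index := by
  have fiber_eq_ker : #{v | φ v = w} = Nat.card φ.ker := by
    rw [AddMonoidHom.card_fiber_eq_of_mem_range φ hw φ.range.zero_mem, Nat.card_eq_fintype_card,
      Fintype.card_subtype]
    simp only [AddMonoidHom.mem_ker]
  rw [fiber_eq_ker, ← Nat.card_eq_fintype_card, ← Nat.card_eq_fintype_card,
    ← φ.range.card_mul_index, ← φ.ker.card_mul_index, AddSubgroup.index_ker]
  ring

theorem mul_sum_card_fiber_interval_le {n : ℕ} [NeZero n] {V : Type*} [AddGroup V] [Fintype V]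
    (φ : V →+ ZMod n) (c : ZMod n) (T : ℕ) :
    n * ∑ t ∈ range T, #{v | φ v = c + (t : ZMod n)}
      ≤ Fintype.card V * (T + φ.range.index) := by
  set R : Finset ℕ := {t ∈ range T | c + (t : ZMod n) ∈ φ.range} with hR
  have mem_range_of_card_fiber_ne_zero (t : ℕ) (ht : #{v | φ v = c + (t : ZMod n)} ≠ 0) :
      c + (t : ZMod n) ∈ φ.range := by
    obtain ⟨v, hv⟩ := card_ne_zero.1 ht
    exact ⟨v, (mem_filter.1 hv).2⟩
  have modEq : ∀ t ∈ R, ∀ t' ∈ R, t ≡ t' [MOD φ.range.index] := by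
    intro t ht t' ht'
    refine Nat.modEq_iff_dvd.2 (index_dvd_of_intCast_mem φ.range ?_)
    have := sub_mem (mem_filter.1 ht').2 (mem_filter.1 ht).2
    rw [add_sub_add_left_eq_sub] at this
    exact_mod_cast this
  calc n * ∑ t ∈ range T, #{v | φ v = c + (t : ZMod n)}
      = ∑ t ∈ R, n * #{v | φ v = c + (t : ZMod n)} := by
        rw [mul_sum, hR, sum_filter_of_ne fun t _ h =>
          mem_range_of_card_fiber_ne_zero t (right_ne_zero_of_mul h)]
    _ = ∑ _t ∈ R, Fintype.card V * φ.range.index := sum_congr rfl fun _ ht => by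
        rw [← card_mul_card_fiber φ (mem_filter.1 ht).2, ZMod.card]
    _ = Fintype.card V * (#R * φ.range.index) := by rw [sum_const, smul_eq_mul]; ring
    _ ≤ Fintype.card V * (T + φ.range.index) := by
        gcongr
        exact card_mul_le_add_of_modEq (filter_subset _ _) modEq

end Intervals

section Tracks

/-- Every point of `ZMod n` has points of `X` both behind and ahead of it at distance less than
`D`. -/
def SpreadWithin {n : ℕ} (X : Set (ZMod n)) (D : ℝ) : Prop :=
  ∀ x, ∃ x' x'', x' ∈ X ∧ x'' ∈ X ∧ ∃ t' t'' : ℤ,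
    0 < t' ∧ (t' : ℝ) < D ∧ 0 < t'' ∧ (t'' : ℝ) < D ∧
      x = x' + (t' : ZMod n) ∧ x'' = x + (t'' : ZMod n)

variable {n k : ℕ} [NeZero n]

theorem fl_add (l : Fin k → ZMod n) (y y' : Fin k → ℤ) : fl l (y + y') = fl l y + fl l y' := by
  simp [fl, add_mul, sum_add_distrib]

theorem fl_sub (l : Fin k → ZMod n) (y y' : Fin k → ℤ) : fl l (y - y') = fl l y - fl l y' := by
  simp [fl, sub_mul, sum_sub_distrib]

/-- `f_l(y)` as a function of the random `l`, for a fixed `y`. -/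
def flHom (y : Fin k → ℤ) : (Fin k → ZMod n) →+ ZMod n :=
  AddMonoidHom.mk' (fun l => fl l y) fun l l' => by simp [fl, mul_add, sum_add_distrib]

theorem flHom_single (y : Fin k → ℤ) (i : Fin k) :
    flHom y (Pi.single i (1 : ZMod n)) = (y i : ZMod n) := by
  simp [flHom, fl, Pi.single_apply]

theorem index_range_flHom_le {y : Fin k → ℤ} {i : Fin k} (hi : y i ≠ 0) :
    (flHom (n := n) y).range.index ≤ (y i).natAbs :=
  Nat.le_of_dvd (Int.natAbs_pos.2 hi)
    (Int.natCast_dvd.1 (index_dvd_of_intCast_mem _ ⟨_, flHom_single y i⟩))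

/-- The box of pairs `(y, t)` with `0 ≤ yᵢ < M` and `0 ≤ t < T`. -/
def trackBox (k M T : ℕ) : Finset ((Fin k → ℤ) × ℕ) :=
  Fintype.piFinset (fun _ : Fin k => Ico (0 : ℤ) M) ×ˢ range T

/-- The point `f_l(y) + t`, that is, the endpoint `f_l(y)` of an unshifted track moved on by the
offset `t`. -/
def trackPoint (l : Fin k → ZMod n) (p : (Fin k → ℤ) × ℕ) : ZMod n :=
  fl l p.1 + (p.2 : ZMod n)

theorem mem_trackBox {M T : ℕ} {y : Fin k → ℤ} {t : ℕ} :
    (y, t) ∈ trackBox k M T ↔ (∀ i, 0 ≤ y i ∧ y i < M) ∧ t < T := by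
  simp [trackBox]

theorem card_trackBox (k M T : ℕ) : #(trackBox k M T) = M ^ k * T := by
  simp [trackBox]

theorem mul_sum_card_trackPoint_eq_le (y y' : Fin k → ℤ) (t T : ℕ) :
    n * ∑ t' ∈ range T, #{l : Fin k → ZMod n | trackPoint l (y, t) = trackPoint l (y', t')}
      ≤ n ^ k * (T + (flHom (n := n) (y - y')).range.index) := by
  have eq_iff (l : Fin k → ZMod n) (t' : ℕ) : trackPoint l (y, t) = trackPoint l (y', t') ↔
      flHom (y - y') l = -(t : ZMod n) + (t' : ZMod n) := by
    simp only [trackPoint, flHom, AddMonoidHom.mk'_apply, fl_sub]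
    constructor <;> intro h <;> linear_combination h
  simp only [eq_iff]
  simpa using mul_sum_card_fiber_interval_le (flHom (n := n) (y - y')) (-t) T

theorem index_range_flHom_sub_le {M : ℕ} {y y' : Fin k → ℤ} (hy : ∀ i, 0 ≤ y i ∧ y i < M)
    (hy' : ∀ i, 0 ≤ y' i ∧ y' i < M) :
    (flHom (n := n) (y - y')).range.index ≤ M + if y = y' then n else 0 := by
  split_ifs with h
  · have := (flHom (n := n) (y - y')).range.index_dvd_card
    rw [Nat.card_zmod] at this
    exact (Nat.le_of_dvd (NeZero.pos n) this).trans (Nat.le_add_left n M)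
  · obtain ⟨i, hi⟩ := Function.ne_iff.1 h
    refine (index_range_flHom_le (i := i) (sub_ne_zero.2 hi)).trans ?_
    have := hy i
    have := hy' i
    simp only [Pi.sub_apply]
    omega

theorem mul_sum_card_collisions_trackPoint_le (M T : ℕ) :
    n * ∑ l : Fin k → ZMod n, #(collisions (trackBox k M T) (trackPoint l))
      ≤ n ^ k * (M ^ k * T * (M ^ k * (T + M) + n)) := by
  set B := Fintype.piFinset (fun _ : Fin k => Ico (0 : ℤ) M) with hB
  have card_B : #B = M ^ k := by simp [hB]
  have mem_B {y : Fin k → ℤ} (hy : y ∈ B) (i : Fin k) : 0 ≤ y i ∧ y i < M :=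
    mem_Ico.1 (Fintype.mem_piFinset.1 hy i)
  calc n * ∑ l : Fin k → ZMod n, #(collisions (trackBox k M T) (trackPoint l))
      = ∑ y ∈ B, ∑ t ∈ range T, ∑ y' ∈ B, n * ∑ t' ∈ range T,
          #{l : Fin k → ZMod n | trackPoint l (y, t) = trackPoint l (y', t')} := by
        simp_rw [sum_card_collisions, trackBox, ← hB, sum_product, mul_sum]
    _ ≤ ∑ y ∈ B, ∑ _t ∈ range T, ∑ y' ∈ B, n ^ k * (T + (M + if y = y' then n else 0)) := by
        refine sum_le_sum fun y hy => sum_le_sum fun t _ => sum_le_sum fun y' hy' =>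
          (mul_sum_card_trackPoint_eq_le y y' t T).trans ?_
        gcongr
        exact index_range_flHom_sub_le (mem_B hy) (mem_B hy')
    _ = ∑ _y ∈ B, ∑ _t ∈ range T, n ^ k * (M ^ k * (T + M) + n) := by
        refine sum_congr rfl fun y hy => sum_congr rfl fun t _ => ?_
        simp_rw [← mul_sum, ← add_assoc, sum_add_distrib (s := B), sum_ite_eq, if_pos hy, sum_const,
          card_B, smul_eq_mul]
        ring
    _ = n ^ k * (M ^ k * T * (M ^ k * (T + M) + n)) := by
        simp only [sum_const, card_B, card_range, smul_eq_mul]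
        ring

theorem card_not_pairSumsCover_trackPoint_mul_le (M T : ℕ) :
    #{l : Fin k → ZMod n | ¬ PairSumsCover (trackBox k M T) (trackPoint l)} * (M ^ k * T) ^ 2
      ≤ n ^ k * (M ^ k * T * (M ^ k * M + n)) := by
  have markov := (card_not_pairSumsCover_mul_add_le (trackBox k M T)
    (trackPoint (n := n))).trans_eq (by rw [ZMod.card])
  have := markov.trans (mul_sum_card_collisions_trackPoint_le M T)
  rw [card_trackBox, Fintype.card_pi_const, ZMod.card] at this
  linarith

theorem one_sub_le_lProb {δ : ℝ} {E : (Fin k → ZMod n) → Prop}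
    (hE : (#{l | ¬ E l} : ℝ) ≤ δ * n ^ k) : 1 - δ ≤ lProb n k E := by
  have hn : (0 : ℝ) < n := Nat.cast_pos.2 (NeZero.pos n)
  have card_add : (#{l | E l} : ℝ) + #{l | ¬ E l} = n ^ k := by
    exact_mod_cast (card_filter_add_card_filter_not E).trans (by simp)
  rw [lProb, Fintype.card_pi_const, ZMod.card, Nat.cast_pow, le_div_iff₀ (by positivity)]
  linarith

theorem lProb_mono {E E' : (Fin k → ZMod n) → Prop} (h : ∀ l, E l → E' l) :
    lProb n k E ≤ lProb n k E' := by
  unfold lProb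
  gcongr with l
  exact h l

theorem one_sub_le_lProb_pairSumsCover {M T : ℕ} {δ : ℝ} (hM : 0 < M) (hT : 0 < T)
    (h : (M : ℝ) ^ k * M + n ≤ δ * (M ^ k * T)) :
    1 - δ ≤ lProb n k fun l => PairSumsCover (trackBox k M T) (trackPoint l) := by
  refine one_sub_le_lProb (le_of_mul_le_mul_right (a := ((M : ℝ) ^ k * T) ^ 2) ?_ (by positivity))
  calc (#{l : Fin k → ZMod n | ¬ PairSumsCover (trackBox k M T) (trackPoint l)} : ℝ)
        * ((M : ℝ) ^ k * T) ^ 2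
      ≤ (n : ℝ) ^ k * ((M : ℝ) ^ k * T * ((M : ℝ) ^ k * M + n)) := by
        exact_mod_cast card_not_pairSumsCover_trackPoint_mul_le M T
    _ ≤ (n : ℝ) ^ k * ((M : ℝ) ^ k * T * (δ * (M ^ k * T))) := by gcongr
    _ = δ * n ^ k * ((M : ℝ) ^ k * T) ^ 2 := by ring

/-- The set `Ξ_m` of endpoints of tracks of length `L`; only the residue of `L` matters. -/
def trackEndpoints (l : Fin k → ZMod n) (L : ZMod n) (m : ℕ) : Set (ZMod n) :=
  {x | ∃ y : Fin k → ℤ, (∀ i, 0 ≤ y i ∧ y i < (m : ℤ)) ∧ x = L + fl l y}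

theorem PairSumsCover.exists_fl_add_eq {M T m : ℕ} {l : Fin k → ZMod n}
    (hl : PairSumsCover (trackBox k M T) (trackPoint l)) (hMm : 2 * M ≤ m + 1) (w : ZMod n) :
    ∃ y : Fin k → ℤ, (∀ i, 0 ≤ y i ∧ y i < (m : ℤ)) ∧
      ∃ t : ℤ, 0 ≤ t ∧ t < 2 * T - 1 ∧ fl l y + (t : ZMod n) = w := by
  obtain ⟨⟨y, t⟩, hs, ⟨y', t'⟩, hs', hw⟩ := hl w
  obtain ⟨hy, ht⟩ := mem_trackBox.1 hs
  obtain ⟨hy', ht'⟩ := mem_trackBox.1 hs'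
  refine ⟨y + y', fun i => ?_, t + t', by omega, by omega, ?_⟩
  · have := hy i
    have := hy' i
    simp only [Pi.add_apply]
    omega
  · rw [← hw, fl_add, trackPoint, trackPoint]
    push_cast
    ring

theorem PairSumsCover.spreadWithin_trackEndpoints {M T m : ℕ} {D : ℝ} {l : Fin k → ZMod n}
    (hl : PairSumsCover (trackBox k M T) (trackPoint l)) (hMm : 2 * M ≤ m + 1)
    (hTD : (2 * T - 1 : ℝ) < D) (L : ZMod n) : SpreadWithin (trackEndpoints l L m) D := by
  intro x
  -- As `0 ≤ t ≤ 2T - 2`, the targets shifted by `-1` and by `2T - 1` leave the offsets `t₁ + 1` and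
  -- `2T - 1 - t₂`, both between `1` and `2T - 1`.
  obtain ⟨y₁, hy₁, t₁, ht₁, ht₁', h₁⟩ := hl.exists_fl_add_eq hMm (x - L - 1)
  obtain ⟨y₂, hy₂, t₂, ht₂, ht₂', h₂⟩ :=
    hl.exists_fl_add_eq hMm (x - L + ((2 * T - 1 : ℤ) : ZMod n))
  have lt_D (t : ℤ) (ht : t ≤ 2 * T - 1) : (t : ℝ) < D :=
    lt_of_le_of_lt (by exact_mod_cast ht) hTD
  refine ⟨_, _, ⟨y₁, hy₁, rfl⟩, ⟨y₂, hy₂, rfl⟩, t₁ + 1, 2 * T - 1 - t₂, by omega,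
    lt_D _ (by omega), by omega, lt_D _ (by omega), ?_, ?_⟩
  · push_cast
    linear_combination -h₁
  · rw [Int.cast_sub]
    linear_combination h₂

end Tracks

section Asymptotics

variable (k : ℕ) {c δ : ℝ}

theorem mul_rpow_le_mOf (n : ℕ) :
    c * (n : ℝ) ^ ((1 : ℝ) / (2 * (k : ℝ) + 2)) ≤ mOf k c n :=
  Nat.le_ceil _

/-- `⌈m / 2⌉`, so that the sum of two integers below it is below `m`. -/
def halfWidth (k : ℕ) (c : ℝ) (n : ℕ) : ℕ := (mOf k c n + 1) / 2

theorem two_mul_halfWidth_le (n : ℕ) : 2 * halfWidth k c n ≤ mOf k c n + 1 :=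
  Nat.mul_div_le _ 2

theorem mOf_le_two_mul_halfWidth (n : ℕ) : mOf k c n ≤ 2 * halfWidth k c n := by
  unfold halfWidth
  omega

theorem halfWidth_pos (hc : 0 < c) {n : ℕ} (hn : 0 < n) : 0 < halfWidth k c n := by
  have : 0 < mOf k c n := Nat.ceil_pos.2 (by positivity)
  have := mOf_le_two_mul_halfWidth k (c := c) n
  omega

/-- The value of `T` that makes the bound `(M + n / M ^ k) / T` on the proportion of bad `l` at most
`δ`, where `M` is `halfWidth k c n`. -/
def offsetCount (k : ℕ) (c δ : ℝ) (n : ℕ) : ℕ :=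
  ⌈(halfWidth k c n + n / (halfWidth k c n : ℝ) ^ k) / δ⌉₊

theorem offsetCount_pos (hc : 0 < c) (hδ : 0 < δ) {n : ℕ} (hn : 0 < n) :
    0 < offsetCount k c δ n := by
  have := halfWidth_pos k hc hn
  exact Nat.ceil_pos.2 (by positivity)

theorem halfWidth_pow_mul_add_le (hc : 0 < c) (hδ : 0 < δ) {n : ℕ} (hn : 0 < n) :
    (halfWidth k c n : ℝ) ^ k * halfWidth k c n + n
      ≤ δ * ((halfWidth k c n : ℝ) ^ k * offsetCount k c δ n) := by
  have hM : (0 : ℝ) < halfWidth k c n := Nat.cast_pos.2 (halfWidth_pos k hc hn)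
  calc (halfWidth k c n : ℝ) ^ k * halfWidth k c n + n
      = δ * ((halfWidth k c n : ℝ) ^ k
          * ((halfWidth k c n + n / (halfWidth k c n : ℝ) ^ k) / δ)) := by field_simp
    _ ≤ δ * ((halfWidth k c n : ℝ) ^ k * offsetCount k c δ n) := by
        gcongr
        exact Nat.le_ceil _

theorem div_halfWidth_pow_le (hc : 0 < c) {n : ℕ} (hn : 0 < n) :
    n / (halfWidth k c n : ℝ) ^ k
      ≤ 2 ^ k / c ^ k * (n : ℝ) ^ (((k : ℝ) + 2) / (2 * (k : ℝ) + 2)) := by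
  set u : ℝ := (1 : ℝ) / (2 * (k : ℝ) + 2) with hu
  set e : ℝ := ((k : ℝ) + 2) / (2 * (k : ℝ) + 2) with he
  have hn' : (0 : ℝ) < n := Nat.cast_pos.2 hn
  have hM : (0 : ℝ) < halfWidth k c n := Nat.cast_pos.2 (halfWidth_pos k hc hn)
  have le_two_mul : c * (n : ℝ) ^ u ≤ 2 * halfWidth k c n :=
    (mul_rpow_le_mOf k n).trans (by exact_mod_cast mOf_le_two_mul_halfWidth k n)
  have rpow_mul_rpow : ((n : ℝ) ^ u) ^ k * (n : ℝ) ^ e = n := by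
    rw [← Real.rpow_mul_natCast hn'.le, ← Real.rpow_add hn', show u * k + e = 1 by
      rw [he, hu]; field_simp; ring, Real.rpow_one]
  rw [div_le_iff₀ (by positivity)]
  calc (n : ℝ) = (c * (n : ℝ) ^ u) ^ k / c ^ k * (n : ℝ) ^ e := by
        rw [mul_pow, mul_div_cancel_left₀ _ (by positivity), rpow_mul_rpow]
    _ ≤ (2 * halfWidth k c n) ^ k / c ^ k * (n : ℝ) ^ e := by gcongr
    _ = 2 ^ k / c ^ k * (n : ℝ) ^ e * (halfWidth k c n : ℝ) ^ k := by ring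

theorem eventually_const_mul_rpow_le_rpow {a b : ℝ} (hab : a < b) (C : ℝ) :
    ∀ᶠ n : ℕ in atTop, C * (n : ℝ) ^ a ≤ (n : ℝ) ^ b := by
  have large : ∀ᶠ n : ℕ in atTop, C ≤ (n : ℝ) ^ (b - a) :=
    ((tendsto_rpow_atTop (sub_pos.2 hab)).comp tendsto_natCast_atTop_atTop).eventually_ge_atTop C
  filter_upwards [large, eventually_gt_atTop 0] with n hC hn
  have hn' : (0 : ℝ) < n := Nat.cast_pos.2 hn
  calc C * (n : ℝ) ^ a ≤ (n : ℝ) ^ (b - a) * (n : ℝ) ^ a := by gcongr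
    _ = (n : ℝ) ^ b := by rw [← Real.rpow_add hn', sub_add_cancel]

theorem eventually_two_mul_halfWidth_add_le (hc : 0 < c) (C : ℝ) {ε : ℝ} (hε : 0 < ε) :
    ∀ᶠ n : ℕ in atTop, 2 * (halfWidth k c n : ℝ) + C
      ≤ ε * (n : ℝ) ^ (((k : ℝ) + 2) / (2 * (k : ℝ) + 2)) := by
  set u : ℝ := (1 : ℝ) / (2 * (k : ℝ) + 2) with hu
  set e : ℝ := ((k : ℝ) + 2) / (2 * (k : ℝ) + 2) with he
  have hue : u < e := by
    rw [hu, he]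
    gcongr
    linarith [k.cast_nonneg (α := ℝ)]
  filter_upwards [eventually_const_mul_rpow_le_rpow hue ((c + (2 + |C|)) / ε),
    eventually_ge_atTop 1] with n hn hn1
  have one_le : 1 ≤ (n : ℝ) ^ u := Real.one_le_rpow (Nat.one_le_cast.2 hn1) (by positivity)
  have mOf_lt : (mOf k c n : ℝ) < c * (n : ℝ) ^ u + 1 := Nat.ceil_lt_add_one (by positivity)
  have two_mul_le : (2 * halfWidth k c n : ℝ) ≤ mOf k c n + 1 := by
    exact_mod_cast two_mul_halfWidth_le k n
  calc 2 * (halfWidth k c n : ℝ) + C ≤ c * (n : ℝ) ^ u + (2 + |C|) * 1 := by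
        linarith [le_abs_self C]
    _ ≤ c * (n : ℝ) ^ u + (2 + |C|) * (n : ℝ) ^ u := by gcongr
    _ = ε * ((c + (2 + |C|)) / ε * (n : ℝ) ^ u) := by field_simp
    _ ≤ ε * (n : ℝ) ^ e := by gcongr

theorem eventually_two_mul_offsetCount_sub_one_lt (hc : 0 < c) (hδ : 0 < δ) :
    ∀ᶠ n : ℕ in atTop, 2 * (offsetCount k c δ n : ℝ) - 1
      < (2 ^ (k + 1) + 1) / (δ * c ^ k) * (n : ℝ) ^ (((k : ℝ) + 2) / (2 * (k : ℝ) + 2)) := by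
  filter_upwards [eventually_two_mul_halfWidth_add_le k hc δ (ε := 1 / c ^ k) (by positivity),
    eventually_gt_atTop 0] with n hM hn
  set E := (n : ℝ) ^ (((k : ℝ) + 2) / (2 * (k : ℝ) + 2))
  set M : ℝ := (halfWidth k c n : ℝ)
  have offsetCount_lt : (offsetCount k c δ n : ℝ) < (M + n / M ^ k) / δ + 1 :=
    Nat.ceil_lt_add_one (by positivity)
  calc 2 * (offsetCount k c δ n : ℝ) - 1 < 2 * ((M + n / M ^ k) / δ + 1) - 1 := by gcongr
    _ = (2 * M + δ + 2 * (n / M ^ k)) / δ := by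
        rw [eq_div_iff hδ.ne', sub_mul, mul_assoc, add_mul, div_mul_cancel₀ _ hδ.ne']
        ring
    _ ≤ (1 / c ^ k * E + 2 * (2 ^ k / c ^ k * E)) / δ := by
        gcongr
        exact div_halfWidth_pow_le k hc hn
    _ = (2 ^ (k + 1) + 1) / (δ * c ^ k) * E := by
        field_simp
        ring

theorem eventually_one_sub_le_lProb_spreadWithin (hc : 0 < c) (hδ : 0 < δ) :
    ∀ᶠ n : ℕ in atTop, ∀ [NeZero n] (L : ZMod n),
      1 - δ ≤ lProb n k fun l => SpreadWithin (trackEndpoints l L (mOf k c n))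
        ((2 ^ (k + 1) + 1) / (δ * c ^ k) * (n : ℝ) ^ (((k : ℝ) + 2) / (2 * (k : ℝ) + 2))) := by
  filter_upwards [eventually_two_mul_offsetCount_sub_one_lt k hc hδ] with n hn _ L
  have hn0 : 0 < n := NeZero.pos n
  exact (one_sub_le_lProb_pairSumsCover (halfWidth_pos k hc hn0) (offsetCount_pos k hc hδ hn0)
    (halfWidth_pow_mul_add_le k hc hδ hn0)).trans
      (lProb_mono fun l hl => hl.spreadWithin_trackEndpoints (two_mul_halfWidth_le k n) hn L)

end Asymptotics

theorem track_endpoints_spread_general (k : ℕ) (lam₃ : ℝ) (hlam : 0 < lam₃) (δ₄ : ℝ) (h0 : 0 < δ₄) :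
    ∃ α₄ : ℝ, 0 < α₄ ∧ ∀ ρ : ℝ, 0 < ρ → ∃ N : ℕ, ∀ (n : ℕ) [NeZero n], N ≤ n → ∀ L : ZMod n,
      1 - δ₄ ≤ lProb n k fun l =>
        SpreadWithin (trackEndpoints l L (mOf k (lam₃ * √ρ) n))
          (α₄ * ρ ^ (-(k : ℝ) / 2) * (n : ℝ) ^ (((k : ℝ) + 2) / (2 * (k : ℝ) + 2))) := by
  refine ⟨(2 ^ (k + 1) + 1) / (δ₄ * lam₃ ^ k), by positivity, fun ρ hρ => ?_⟩
  have sqrt_pow : (√ρ ^ k)⁻¹ = ρ ^ (-(k : ℝ) / 2) := by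
    rw [neg_div, Real.rpow_neg hρ.le, Real.rpow_div_two_eq_sqrt _ hρ.le, Real.rpow_natCast]
  have constant_eq : (2 ^ (k + 1) + 1) / (δ₄ * (lam₃ * √ρ) ^ k)
      = (2 ^ (k + 1) + 1) / (δ₄ * lam₃ ^ k) * ρ ^ (-(k : ℝ) / 2) := by
    rw [mul_pow, ← mul_assoc, div_mul_eq_div_div, div_eq_mul_inv _ (√ρ ^ k), sqrt_pow]
  obtain ⟨N, hN⟩ := eventually_atTop.1
    (eventually_one_sub_le_lProb_spreadWithin k (c := lam₃ * √ρ) (by positivity) h0)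
  exact ⟨N, fun n _ hn L => constant_eq ▸ hN n hn L⟩

/-- fix `ρ ∈ (0,1]` and `λ₃ > 0`, set `m = ⌈λ₃ √ρ n^{1/(2k+2)}⌉` and
`L = ⌊ρ n^{(k+2)/(k+1)}⌋`, and let `Ξ_m = {L + f_l(y) : 0 ≤ yᵢ < m}` be the set of
possible loop-erased track endpoints. For every `0 < δ₄ < 1` there are `α₄ > 0` and `N`
such that for all `n ≥ N`, with probability at least `1 - δ₄` over `l`: every `x ∈ ZMod n`
has points of `Ξ_m` on both sides within distance `α₄ ρ^{-k/2} n^{(k+2)/(2k+2)}`. -/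
theorem track_endpoints_spread (k : ℕ) (hk : 1 ≤ k) (ρ lam₃ : ℝ)
    (hρ0 : 0 < ρ) (hρ1 : ρ ≤ 1) (hlam : 0 < lam₃)
    (δ₄ : ℝ) (h0 : 0 < δ₄) (h1 : δ₄ < 1) :
    ∃ α₄ : ℝ, 0 < α₄ ∧ ∃ N : ℕ, ∀ (n : ℕ) [NeZero n], N ≤ n →
      1 - δ₄ ≤ lProb n k (fun l =>
        ∀ x : ZMod n, ∃ x' x'' : ZMod n,
          (∃ y : Fin k → ℤ,
              (∀ i, 0 ≤ y i ∧
                y i < (⌈lam₃ * Real.sqrt ρ * (n : ℝ) ^ ((1 : ℝ) / (2 * (k : ℝ) + 2))⌉₊ : ℤ)) ∧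
              x' = ((⌊ρ * (n : ℝ) ^ (((k : ℝ) + 2) / ((k : ℝ) + 1))⌋₊ : ℕ) : ZMod n) + fl l y) ∧
          (∃ y : Fin k → ℤ,
              (∀ i, 0 ≤ y i ∧
                y i < (⌈lam₃ * Real.sqrt ρ * (n : ℝ) ^ ((1 : ℝ) / (2 * (k : ℝ) + 2))⌉₊ : ℤ)) ∧
              x'' = ((⌊ρ * (n : ℝ) ^ (((k : ℝ) + 2) / ((k : ℝ) + 1))⌋₊ : ℕ) : ZMod n) + fl l y) ∧
          ∃ t' t'' : ℤ,
            0 < t' ∧ (t' : ℝ) < α₄ * ρ ^ (-(k : ℝ) / 2) * (n : ℝ) ^ (((k : ℝ) + 2) / (2 * (k : ℝ) + 2)) ∧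
            0 < t'' ∧ (t'' : ℝ) < α₄ * ρ ^ (-(k : ℝ) / 2) * (n : ℝ) ^ (((k : ℝ) + 2) / (2 * (k : ℝ) + 2)) ∧
            x = x' + (t' : ZMod n) ∧ x'' = x + (t'' : ZMod n)) := by
  obtain ⟨α₄, hα₄, spread⟩ := track_endpoints_spread_general k lam₃ hlam δ₄ h0
  exact ⟨α₄, hα₄, (spread ρ hρ0).imp fun _ hN n _ hn => hN n hn _⟩
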